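/- There exists a constant C > 0 such that for all positive integers Q and K: ∑_{q=1}^{Q} F(q)^K ≤ Q·(C·K²)^K, where F(q) = ∑_{r | q} (log r)/r. -/

import Mathlib

open Filter

/-- `F(q) = ∑_{r | q} (log₂ r)/r`. -/
noncomputable def Ffun (q : ℕ) : ℝ := ∑ r ∈ q.divisors, Real.logb 2 r / r

/-- Weighted power-mean inequality without normalisation. -/
lemma holder_aux (s : Finset ℕ) (w c : ℕ → ℝ) (S : ℝ) (hw : ∀ r ∈ s, 0 ≤ w r)
    (hc : ∀ r ∈ s, 0 ≤ c r) (hS : ∑ r ∈ s, w r ≤ S) (hpos : 0 < ∑ r ∈ s, w r)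
    (K : ℕ) :
    (∑ r ∈ s, w r * c r) ^ (K + 1) ≤ S ^ K * ∑ r ∈ s, w r * c r ^ (K + 1) := by
  set W := ∑ r ∈ s, w r with hW
  have h := Real.pow_arith_mean_le_arith_mean_pow s (fun r => w r / W) c
    (fun r hr => div_nonneg (hw r hr) hpos.le)
    (by rw [← Finset.sum_div, ← hW, div_self hpos.ne']) hc (K + 1)
  have e1 : ∑ r ∈ s, w r / W * c r = (∑ r ∈ s, w r * c r) / W := by
    rw [Finset.sum_div]; exact Finset.sum_congr rfl fun r _ => by ring
  have e2 : ∑ r ∈ s, w r / W * c r ^ (K + 1) = (∑ r ∈ s, w r * c r ^ (K + 1)) / W := by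
    rw [Finset.sum_div]; exact Finset.sum_congr rfl fun r _ => by ring
  rw [e1, e2, div_pow, div_le_iff₀ (by positivity)] at h
  have hn : 0 ≤ ∑ r ∈ s, w r * c r ^ (K + 1) :=
    Finset.sum_nonneg fun r hr => mul_nonneg (hw r hr) (pow_nonneg (hc r hr) _)
  calc _ ≤ _ := h
    _ = W ^ K * ∑ r ∈ s, w r * c r ^ (K + 1) := by
      rw [pow_succ]; field_simp
    _ ≤ _ := by gcongr

lemma step_aux (e : ℝ) (he : 0 < e) (n : ℕ) (hn : 1 ≤ n) :
    ((n + 1 : ℕ) : ℝ) ^ (-1 - e) ≤ ((n : ℝ) ^ (-e) - ((n + 1 : ℕ) : ℝ) ^ (-e)) / e := by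
  have hn0 : (0:ℝ) < n := by exact_mod_cast hn
  set m : ℝ := ((n + 1 : ℕ) : ℝ) with hm
  have hmn : m = n + 1 := by simp [hm]
  have hm0 : 0 < m := by rw [hmn]; positivity
  have h1 : m ^ (-1 - e) = m ^ (-e) / m := by
    rw [show -1 - e = -e - 1 by ring, Real.rpow_sub_one hm0.ne']
  have h2 : (n:ℝ) ^ (-e) = m ^ (-e) * ((n:ℝ) / m) ^ (-e) := by
    rw [← Real.mul_rpow hm0.le (by positivity)]
    congr 1; field_simp
  have h3 : 1 + e / m ≤ ((n:ℝ) / m) ^ (-e) := by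
    rw [Real.rpow_def_of_pos (by positivity)]
    have hl := Real.log_le_sub_one_of_pos (show 0 < (n:ℝ) / m by positivity)
    have hq : (n:ℝ) / m - 1 = - (1 / m) := by rw [hmn]; field_simp; ring
    rw [hq] at hl
    have : e / m ≤ Real.log (n / m) * -e := by
      have : e / m = e * (1 / m) := by ring
      nlinarith
    linarith [Real.add_one_le_exp (Real.log (n / m) * -e)]
  have hp : 0 < m ^ (-e) := Real.rpow_pos_of_pos hm0 _
  rw [h1, h2, le_div_iff₀ he]
  have := mul_le_mul_of_nonneg_left h3 hp.le
  have e4 : m ^ (-e) / m * e = m ^ (-e) * (1 + e / m) - m ^ (-e) := by ring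
  linarith

lemma zeta_aux (e : ℝ) (he : 0 < e) (n : ℕ) (hn : 1 ≤ n) :
    ∑ r ∈ Finset.Icc 1 n, (r : ℝ) ^ (-1 - e) ≤ 1 + (1 - (n : ℝ) ^ (-e)) / e := by
  induction n, hn using Nat.le_induction with
  | base => simp
  | succ n hn ih =>
    rw [Finset.sum_Icc_succ_top (by omega)]
    have := step_aux e he n hn
    have e4 : (1 - ((n + 1 : ℕ) : ℝ) ^ (-e)) / e = (1 - (n : ℝ) ^ (-e)) / e
      + ((n : ℝ) ^ (-e) - ((n + 1 : ℕ) : ℝ) ^ (-e)) / e := by ring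
    linarith

lemma swap_aux (f : ℕ → ℝ) (hf : ∀ r, 0 ≤ f r) (Q : ℕ) :
    ∑ q ∈ Finset.Icc 1 Q, ∑ r ∈ q.divisors, f r ≤ Q * ∑ r ∈ Finset.Icc 1 Q, f r / r := by
  have h1 : ∀ q ∈ Finset.Icc 1 Q, ∑ r ∈ q.divisors, f r
      = ∑ r ∈ Finset.Icc 1 Q, if r ∣ q then f r else 0 := by
    intro q hq
    rw [Finset.mem_Icc] at hq
    rw [← Finset.sum_filter]
    refine Finset.sum_congr ?_ fun _ _ => rfl
    ext r
    simp only [Nat.mem_divisors, Finset.mem_filter, Finset.mem_Icc]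
    constructor
    · rintro ⟨h, _⟩
      exact ⟨⟨Nat.pos_of_dvd_of_pos h hq.1, (Nat.le_of_dvd hq.1 h).trans hq.2⟩, h⟩
    · rintro ⟨_, h⟩
      exact ⟨h, by omega⟩
  rw [Finset.sum_congr rfl h1, Finset.sum_comm, Finset.mul_sum]
  refine Finset.sum_le_sum fun r hr => ?_
  rw [← Finset.sum_filter, Finset.sum_const, nsmul_eq_mul]
  have hc : (Finset.filter (fun q => r ∣ q) (Finset.Icc 1 Q)).card = Q / r :=
    Nat.Ioc_filter_dvd_card_eq_div Q r
  rw [hc]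
  calc ((Q / r : ℕ) : ℝ) * f r ≤ ((Q : ℝ) / r) * f r :=
        mul_le_mul_of_nonneg_right Nat.cast_div_le (hf r)
    _ = _ := by ring

theorem stmt13 : ∃ C > (0:ℝ), ∀ Q K : ℕ, 1 ≤ Q → 1 ≤ K →
    ∑ q ∈ Finset.Icc 1 Q, (Ffun q) ^ K ≤ (Q : ℝ) * (C * (K : ℝ) ^ 2) ^ K := by
  have hl2 : 0 < Real.log 2 := Real.log_pos (by norm_num)
  refine ⟨6 / Real.log 2, by positivity, ?_⟩
  intro Q K hQ hK
  obtain ⟨k, rfl⟩ : ∃ k, K = k + 1 := ⟨K - 1, by omega⟩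
  set κ : ℝ := ((k + 1 : ℕ) : ℝ) with hκ
  have hκ1 : 1 ≤ κ := by rw [hκ]; exact_mod_cast hK
  have hκ0 : 0 < κ := by linarith
  set e : ℝ := 1 / (2 * κ) with he
  have he0 : 0 < e := by positivity
  set S : ℝ := ∑ r ∈ Finset.Icc 1 Q, (r : ℝ) ^ (-1 - e) with hS
  have hS0 : 0 ≤ S := Finset.sum_nonneg fun r _ => by positivity
  have hSle : S ≤ 3 * κ := by
    have h := zeta_aux e he0 Q hQ
    have h2 : (1 - (Q : ℝ) ^ (-e)) / e ≤ 1 / e := by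
      have : 0 ≤ (Q : ℝ) ^ (-e) := by positivity
      gcongr; linarith
    have h3 : 1 / e = 2 * κ := by rw [he]; field_simp
    linarith
  set D : ℝ := 2 * κ / Real.log 2 with hD
  have hD0 : 0 < D := by positivity
  have key : ∀ q ∈ Finset.Icc 1 Q, Ffun q ^ (k + 1) ≤
      D ^ (k + 1) * S ^ k * ∑ r ∈ q.divisors, (r : ℝ) ^ (-e) := by
    intro q hq
    rw [Finset.mem_Icc] at hq
    have hpos : ∀ r ∈ q.divisors, (0:ℝ) < r := fun r hr => by
      exact_mod_cast Nat.pos_of_mem_divisors hr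
    have hF0 : 0 ≤ Ffun q := Finset.sum_nonneg fun r hr =>
      div_nonneg (Real.logb_nonneg (by norm_num)
        (by exact_mod_cast Nat.pos_of_mem_divisors hr)) (hpos r hr).le
    have hF : Ffun q ≤ D * ∑ r ∈ q.divisors, (r : ℝ) ^ (-1 - e) * (r : ℝ) ^ (2 * e) := by
      rw [Finset.mul_sum]
      refine Finset.sum_le_sum fun r hr => ?_
      have hr0 := hpos r hr
      have hlog := Real.log_le_rpow_div hr0.le he0
      rw [← Real.rpow_add hr0, show -1 - e + 2 * e = e - 1 by ring,
        Real.rpow_sub_one hr0.ne', Real.logb]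
      have : (r:ℝ) ^ e / e = 2 * κ * (r:ℝ) ^ e := by rw [he]; field_simp
      rw [this] at hlog
      calc _ ≤ 2 * κ * (r:ℝ) ^ e / Real.log 2 / r := by gcongr
        _ = _ := by rw [hD]; ring
    have hH := holder_aux q.divisors (fun r => (r : ℝ) ^ (-1 - e)) (fun r => (r : ℝ) ^ (2 * e)) S
      (fun r _ => by positivity) (fun r _ => by positivity)
      (by
        refine Finset.sum_le_sum_of_subset_of_nonneg ?_ fun r _ _ => by positivity
        intro r hr
        rw [Finset.mem_Icc]
        exact ⟨Nat.pos_of_mem_divisors hr, (Nat.divisor_le hr).trans hq.2⟩)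
      (Finset.sum_pos (fun r hr => Real.rpow_pos_of_pos (hpos r hr) _)
        ⟨1, by simp; omega⟩) k
    have hc : ∑ r ∈ q.divisors, (r : ℝ) ^ (-1 - e) * ((r : ℝ) ^ (2 * e)) ^ (k + 1)
        = ∑ r ∈ q.divisors, (r : ℝ) ^ (-e) := by
      refine Finset.sum_congr rfl fun r hr => ?_
      have hr0 := hpos r hr
      rw [← Real.rpow_natCast, ← Real.rpow_mul hr0.le, ← Real.rpow_add hr0]
      congr 1
      rw [← hκ, he]; field_simp; ring
    simp only [hc] at hH
    calc _ ≤ _ := pow_le_pow_left₀ hF0 hF _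
      _ ≤ _ := by rw [mul_pow, mul_assoc]; gcongr
  calc _ ≤ _ := Finset.sum_le_sum key
    _ = D ^ (k + 1) * S ^ k * ∑ q ∈ Finset.Icc 1 Q, ∑ r ∈ q.divisors, (r : ℝ) ^ (-e) := by
      rw [Finset.mul_sum]
    _ ≤ D ^ (k + 1) * S ^ k * (Q * S) := by
      have h := swap_aux (fun r => (r : ℝ) ^ (-e)) (fun r => by positivity) Q
      have hs : ∑ r ∈ Finset.Icc 1 Q, (r : ℝ) ^ (-e) / r = S := by
        refine Finset.sum_congr rfl fun r hr => ?_
        have hr0 : (r:ℝ) ≠ 0 := by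
          rw [Finset.mem_Icc] at hr
          exact_mod_cast (show r ≠ 0 by omega)
        rw [show -1 - e = -e - 1 by ring, Real.rpow_sub_one hr0]
      simp only [hs] at h
      gcongr
    _ = Q * (D * S) ^ (k + 1) := by ring
    _ ≤ Q * (D * (3 * κ)) ^ (k + 1) := by gcongr
    _ = _ := by
      congr 2
      rw [hD]; ring
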